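/- arXiv:2207.02136 — 2 statements merged into one kernel-verified Lean document; each statement's English description precedes it below -/
import Mathlib

section
/- There exists a family of DAGs G_ℓ with flows X_ℓ (parametrized by ℓ ≥ 1), such that G_ℓ has 7·2^ℓ − 5 edges, the greedy-weight algorithm decomposes X_ℓ into exactly 1 + 2^{ℓ+1} paths, while X_ℓ admits a flow decomposition into 2ℓ + 2 paths; hence the approximation ratio of greedy-weight for minimum flow decomposition with nonnegative weights is Ω(m / log m) in the worst case. -/
open Finset

def IsWalk {V E : Type} (src tgt : E → V) : V → V → List E → Prop
  | a, b, [] => a = b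
  | a, b, e :: L => src e = a ∧ IsWalk src tgt (tgt e) b L

def IsPath {V E : Type} (src tgt : E → V) (s t : V) (L : List E) : Prop :=
  L ≠ [] ∧ IsWalk src tgt s t L

def IsDAG {V E : Type} (src tgt : E → V) : Prop :=
  ∀ (v : V) (L : List E), L ≠ [] → ¬ IsWalk src tgt v v L

def IsFlowN {V E : Type} [Fintype E] [DecidableEq V] (src tgt : E → V) (s t : V)
    (X : E → ℕ) : Prop :=
  ∀ v : V, v ≠ s → v ≠ t →
    (∑ e, if tgt e = v then X e else 0) = ∑ e, if src e = v then X e else 0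

/-- A valid run of the greedy-weight algorithm: at every step a heaviest `s`-`t`
path is removed with its maximum carryable weight. -/
def GreedyRun {V E : Type} [DecidableEq E] (src tgt : E → V) (s t : V)
    (seq : ℕ → E → ℕ) (P : ℕ → List E) (w : ℕ → ℕ) : Prop :=
  ∀ j,
    (seq j ≠ 0 →
      IsPath src tgt s t (P j) ∧
      (∀ e ∈ P j, w j ≤ seq j e) ∧
      (∀ (L : List E) (w' : ℕ), IsPath src tgt s t L → (∀ e ∈ L, w' ≤ seq j e) →
        w' ≤ w j) ∧
      (∀ e, seq (j + 1) e = seq j e - (if e ∈ P j then w j else 0))) ∧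
    (seq j = 0 → seq (j + 1) = 0)

set_option linter.unusedSectionVars false

section General

variable {V E : Type}

theorem walk_append {src tgt : E → V} {a b c : V} {L M : List E} (h1 : IsWalk src tgt a b L)
    (h2 : IsWalk src tgt b c M) : IsWalk src tgt a c (L ++ M) := by
  induction L generalizing a with
  | nil => cases h1; exact h2
  | cons e L ih => exact ⟨h1.1, ih h1.2⟩

theorem walk_map {V' E' : Type} {src tgt : E → V} {src' tgt' : E' → V'} (φ : V → V') (σ : E → E')
    (hs : ∀ e, src' (σ e) = φ (src e)) (ht : ∀ e, tgt' (σ e) = φ (tgt e))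
    {a b : V} {L : List E} (h : IsWalk src tgt a b L) :
    IsWalk src' tgt' (φ a) (φ b) (L.map σ) := by
  induction L generalizing a with
  | nil => exact congrArg φ h
  | cons e L ih =>
    refine ⟨by rw [hs, h.1], ?_⟩
    rw [ht]; exact ih h.2

theorem walk_rank {src tgt : E → V} {rk : V → ℕ} (hrk : ∀ e, rk (src e) < rk (tgt e)) {a b : V}
    {L : List E} (h : IsWalk src tgt a b L) : ∀ e ∈ L, rk a ≤ rk (src e) := by
  induction L generalizing a with
  | nil => simp
  | cons e L ih =>
    intro x hx
    rcases List.mem_cons.1 hx with rfl | hx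
    · rw [h.1]
    · have h1 := ih h.2 x hx
      have h2 := hrk e
      rw [h.1] at h2
      omega

theorem walk_rank_end {src tgt : E → V} {rk : V → ℕ} (hrk : ∀ e, rk (src e) < rk (tgt e)) {a b : V}
    {L : List E} (h : IsWalk src tgt a b L) : rk a + L.length ≤ rk b := by
  induction L generalizing a with
  | nil => cases h; simp
  | cons e L ih =>
    have h1 := ih h.2
    have h2 := hrk e
    rw [h.1] at h2
    simp only [List.length_cons]
    omega

theorem isDAG_of_rank {src tgt : E → V} {rk : V → ℕ} (hrk : ∀ e, rk (src e) < rk (tgt e)) :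
    IsDAG src tgt := by
  intro v L hL h
  have := walk_rank_end hrk h
  have := List.length_pos_iff.2 hL
  omega

theorem walk_unique {src tgt : E → V} {rk : V → ℕ} (hrk : ∀ e, rk (src e) < rk (tgt e)) {a t : V}
    (ht : ∀ e, src e ≠ t)
    {L₀ L : List E} (h0 : IsWalk src tgt a t L₀) (h : IsWalk src tgt a t L)
    (hsub : ∀ e ∈ L, e ∈ L₀) : L = L₀ := by
  induction L₀ generalizing a L with
  | nil =>
    cases L with
    | nil => rfl
    | cons e L => simpa using hsub e
  | cons e L₀ ih =>
    cases L with
    | nil => exact absurd (h0.1.trans h) (ht e)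
    | cons e' L =>
      have he : e' = e := by
        rcases List.mem_cons.1 (hsub e' (by simp)) with h1 | h1
        · exact h1
        · have h2 := walk_rank hrk h0.2 e' h1
          have h3 := hrk e
          rw [h0.1] at h3
          rw [h.1] at h2
          omega
      subst he
      rw [ih h0.2 h.2]
      intro x hx
      rcases List.mem_cons.1 (hsub x (by simp [hx])) with h1 | h1
      · subst h1
        have h2 := walk_rank hrk h.2 x hx
        have h3 := hrk x
        omega
      · exact h1

theorem walk_cross {src tgt : E → V} (S : V → Prop) {a b : V} {L : List E}
    (h : IsWalk src tgt a b L) (ha : S a) (hb : ¬ S b) : ∃ e ∈ L, S (src e) ∧ ¬ S (tgt e) := by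
  induction L generalizing a with
  | nil => cases h; exact absurd ha hb
  | cons e L ih =>
    by_cases hS : S (tgt e)
    · obtain ⟨x, hx, h2⟩ := ih h.2 hS
      exact ⟨x, by simp [hx], h2⟩
    · exact ⟨e, by simp, by rw [h.1]; exact ha, hS⟩

variable [Fintype E] [DecidableEq V] [DecidableEq E]

def HasFlow (src tgt : E → V) (s t : V) (X : E → ℕ) (F : ℤ) : Prop :=
  ∀ v : V, (∑ e, if tgt e = v then (X e : ℤ) else 0) + (if v = s then F else 0) =
    (∑ e, if src e = v then (X e : ℤ) else 0) + (if v = t then F else 0)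

theorem walk_flow {src tgt : E → V} {rk : V → ℕ} (hrk : ∀ e, rk (src e) < rk (tgt e)) {a b : V}
    {L : List E} (h : IsWalk src tgt a b L) (w : ℕ) :
    HasFlow src tgt a b (fun e => if e ∈ L then w else 0) w := by
  induction L generalizing a with
  | nil => cases h; intro v; simp
  | cons e L ih =>
    intro v
    have h1 := ih h.2 v
    have hn : e ∉ L := by
      intro hx
      have h2 := walk_rank hrk h.2 e hx
      have h3 := hrk e
      omega
    have key : ∀ f : E → V, (∑ x, if f x = v then (((if x ∈ e :: L then w else 0) : ℕ) : ℤ) else 0)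
        = (∑ x, if f x = v then (((if x ∈ L then w else 0) : ℕ) : ℤ) else 0)
          + (if f e = v then (w : ℤ) else 0) := by
      intro f
      have : (if f e = v then (w : ℤ) else 0)
          = ∑ x, if x = e then (if f e = v then (w : ℤ) else 0) else 0 := by simp
      rw [this, ← Finset.sum_add_distrib]
      refine Finset.sum_congr rfl fun x _ => ?_
      by_cases hx : x = e
      · subst hx; simp [hn]
      · simp [hx]
    simp only [key]
    rw [h.1]
    simp only [eq_comm (a := v)] at h1 ⊢
    linarith

theorem HasFlow.sub {src tgt : E → V} {s t : V} {X Z W : E → ℕ} {F G : ℤ}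
    (hX : HasFlow src tgt s t X F) (hW : HasFlow src tgt s t W G)
    (h : ∀ e, X e = Z e + W e) : HasFlow src tgt s t Z (F - G) := by
  intro v
  have h1 := hX v
  have h2 := hW v
  have key : ∀ f : E → V, (∑ x, if f x = v then (X x : ℤ) else 0)
      = (∑ x, if f x = v then (Z x : ℤ) else 0) + ∑ x, if f x = v then (W x : ℤ) else 0 := by
    intro f
    rw [← Finset.sum_add_distrib]
    refine Finset.sum_congr rfl fun x _ => ?_
    split_ifs <;> simp [h]
  rw [key, key] at h1
  split_ifs at h1 h2 ⊢ <;> linarith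

theorem HasFlow.isFlowN {src tgt : E → V} {s t : V} {X : E → ℕ} {F : ℤ}
    (hX : HasFlow src tgt s t X F) : IsFlowN src tgt s t X := by
  intro v hs ht
  have := hX v
  simp only [hs, ht, if_false, add_zero] at this
  exact_mod_cast this

theorem sum_pos_exists {f : E → V} {v : V} {X : E → ℕ}
    (h : 0 < ∑ e, if f e = v then (X e : ℤ) else 0) : ∃ e, f e = v ∧ 1 ≤ X e := by
  by_contra! hc
  have : (∑ e, if f e = v then (X e : ℤ) else 0) = 0 := by
    refine Finset.sum_eq_zero fun e _ => ?_
    split_ifs with he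
    · have := hc e he
      omega
    · rfl
  omega

theorem sum_pos_of {f : E → V} {v : V} {X : E → ℕ} {e : E} (he : f e = v) (hX : 1 ≤ X e) :
    0 < ∑ e, if f e = v then (X e : ℤ) else 0 := by
  refine Finset.sum_pos' (fun i _ => ?_) ⟨e, Finset.mem_univ _, ?_⟩
  · split_ifs <;> simp
  · rw [if_pos he]; omega

theorem pos_forward {src tgt : E → V} {s t : V} {rk : V → ℕ} (hrk : ∀ e, rk (src e) < rk (tgt e))
    (hs : ∀ e, tgt e ≠ s) (ht : ∀ v, rk v ≤ rk t) {X : E → ℕ} {F : ℤ}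
    (hX : HasFlow src tgt s t X F) (n : ℕ) :
    ∀ e, rk t - rk (tgt e) ≤ n → 1 ≤ X e →
      ∃ L, IsWalk src tgt (tgt e) t L ∧ ∀ x ∈ L, 1 ≤ X x := by
  induction n with
  | zero =>
    intro e hn he
    by_cases h : tgt e = t
    · exact ⟨[], h, by simp⟩
    · have h1 := hX (tgt e)
      rw [if_neg (hs e), if_neg h, add_zero, add_zero] at h1
      obtain ⟨e', h2, h3⟩ := sum_pos_exists (h1 ▸ sum_pos_of (f := tgt) rfl he)
      have h4 := hrk e'
      have h5 := ht (tgt e')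
      rw [h2] at h4
      omega
  | succ n ih =>
    intro e hn he
    by_cases h : tgt e = t
    · exact ⟨[], h, by simp⟩
    · have h1 := hX (tgt e)
      rw [if_neg (hs e), if_neg h, add_zero, add_zero] at h1
      obtain ⟨e', h2, h3⟩ := sum_pos_exists (h1 ▸ sum_pos_of (f := tgt) rfl he)
      have h4 := hrk e'
      rw [h2] at h4
      obtain ⟨L, hL, hL2⟩ := ih e' (by omega) h3
      exact ⟨e' :: L, ⟨h2, hL⟩, by simpa using ⟨h3, hL2⟩⟩

theorem pos_backward {src tgt : E → V} {s t : V} {rk : V → ℕ} (hrk : ∀ e, rk (src e) < rk (tgt e))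
    (ht : ∀ e, src e ≠ t) {X : E → ℕ} {F : ℤ}
    (hX : HasFlow src tgt s t X F) (n : ℕ) :
    ∀ e, rk (src e) ≤ n → 1 ≤ X e →
      ∃ L, IsWalk src tgt s (src e) L ∧ ∀ x ∈ L, 1 ≤ X x := by
  induction n with
  | zero =>
    intro e hn he
    by_cases h : src e = s
    · exact ⟨[], h.symm, by simp⟩
    · have h1 := hX (src e)
      rw [if_neg (ht e), if_neg h, add_zero, add_zero] at h1
      obtain ⟨e', h2, h3⟩ := sum_pos_exists (h1 ▸ sum_pos_of (f := src) rfl he)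
      have h4 := hrk e'
      rw [h2] at h4
      omega
  | succ n ih =>
    intro e hn he
    by_cases h : src e = s
    · exact ⟨[], h.symm, by simp⟩
    · have h1 := hX (src e)
      rw [if_neg (ht e), if_neg h, add_zero, add_zero] at h1
      obtain ⟨e', h2, h3⟩ := sum_pos_exists (h1 ▸ sum_pos_of (f := src) rfl he)
      have h4 := hrk e'
      rw [h2] at h4
      obtain ⟨L, hL, hL2⟩ := ih e' (by omega) h3
      refine ⟨L ++ [e'], walk_append hL ⟨rfl, h2⟩, ?_⟩
      intro x hx
      rcases List.mem_append.1 hx with hx | hx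
      · exact hL2 x hx
      · rw [List.mem_singleton.1 hx]; exact h3

theorem pos_path {src tgt : E → V} {s t : V} {rk : V → ℕ} (hrk : ∀ e, rk (src e) < rk (tgt e))
    (hs : ∀ e, tgt e ≠ s) (ht : ∀ e, src e ≠ t) (ht' : ∀ v, rk v ≤ rk t) {X : E → ℕ} {F : ℤ}
    (hX : HasFlow src tgt s t X F) (h0 : X ≠ 0) :
    ∃ L, IsPath src tgt s t L ∧ ∀ x ∈ L, 1 ≤ X x := by
  obtain ⟨e, he⟩ := Function.ne_iff.1 h0
  have he : 1 ≤ X e := Nat.one_le_iff_ne_zero.2 he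
  obtain ⟨L, hL, hL2⟩ := pos_backward hrk ht hX _ e le_rfl he
  obtain ⟨M, hM, hM2⟩ := pos_forward hrk hs ht' hX _ e le_rfl he
  refine ⟨L ++ e :: M, ⟨by simp, walk_append hL ⟨rfl, hM⟩⟩, ?_⟩
  intro x hx
  rcases List.mem_append.1 hx with hx | hx
  · exact hL2 x hx
  · rcases List.mem_cons.1 hx with rfl | hx
    · exact he
    · exact hM2 x hx

theorem HasFlow.eq_zero {src tgt : E → V} {s t : V} {rk : V → ℕ}
    (hrk : ∀ e, rk (src e) < rk (tgt e)) (hst : s ≠ t)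
    (hs : ∀ e, tgt e ≠ s) (ht : ∀ e, src e ≠ t) (ht' : ∀ v, rk v ≤ rk t) {X : E → ℕ}
    (hX : HasFlow src tgt s t X 0) : X = 0 := by
  by_contra h0
  obtain ⟨L, ⟨h1, h2⟩, h3⟩ := pos_path hrk hs ht ht' hX h0
  cases L with
  | nil => exact h1 rfl
  | cons e L =>
    have h4 := hX s
    simp only [hs, if_false, Finset.sum_const_zero, ite_self, add_zero] at h4
    have := sum_pos_of (f := src) h2.1 (h3 e (by simp))
    omega

theorem HasFlow.ne_zero {src tgt : E → V} {s t : V} (hst : s ≠ t) {X : E → ℕ} {F : ℤ}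
    (hX : HasFlow src tgt s t X F) (hF : F ≠ 0) : X ≠ 0 := by
  rintro rfl
  have := hX s
  simp [hst] at this
  exact hF this

theorem unit_phase {src tgt : E → V} {s t : V} {rk : V → ℕ}
    (hrk : ∀ e, rk (src e) < rk (tgt e)) (hst : s ≠ t)
    (hs : ∀ e, tgt e ≠ s) (ht : ∀ e, src e ≠ t) (ht' : ∀ v, rk v ≤ rk t)
    {seq : ℕ → E → ℕ} {P : ℕ → List E} {w : ℕ → ℕ} (hG : GreedyRun src tgt s t seq P w)
    (S : V → Prop) (hSs : S s) (hSt : ¬ S t) (j N : ℕ)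
    (hcut : ∀ e, S (src e) → ¬ S (tgt e) → seq j e ≤ 1)
    (hF : HasFlow src tgt s t (seq j) N) :
    seq (j + N) = 0 ∧ ∀ i < N, seq (j + i) ≠ 0 := by
  have main : ∀ i ≤ N, HasFlow src tgt s t (seq (j + i)) ((N : ℤ) - i) ∧
      ∀ e, S (src e) → ¬ S (tgt e) → seq (j + i) e ≤ 1 := by
    intro i
    induction i with
    | zero => intro _; simpa using ⟨hF, hcut⟩
    | succ i ih =>
      intro hi
      obtain ⟨h1, h2⟩ := ih (by omega)
      have hne : seq (j + i) ≠ 0 := h1.ne_zero hst (by omega)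
      obtain ⟨g1, g2, g3, g4⟩ := (hG (j + i)).1 hne
      have hw1 : w (j + i) ≤ 1 := by
        obtain ⟨e, he, c1, c2⟩ := walk_cross S g1.2 hSs hSt
        exact (g2 e he).trans (h2 e c1 c2)
      have hw2 : 1 ≤ w (j + i) := by
        obtain ⟨L, hL, hL2⟩ := pos_path hrk hs ht ht' h1 hne
        exact g3 L 1 hL hL2
      have hw : w (j + i) = 1 := by omega
      constructor
      · have := h1.sub (walk_flow hrk g1.2 (w (j + i))) (Z := seq (j + i + 1)) (by
          intro e
          rw [g4 e]
          split_ifs with h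
          · have := g2 e h
            omega
          · simp)
        rw [hw] at this
        rw [← add_assoc]
        convert this using 1
        push_cast; ring
      · intro e c1 c2
        rw [← add_assoc, g4 e]
        exact (Nat.sub_le _ _).trans (h2 e c1 c2)
  constructor
  · have := (main N le_rfl).1
    rw [sub_self] at this
    exact this.eq_zero hrk hst hs ht ht'
  · intro i hi
    exact (main i hi.le).1.ne_zero hst (by omega)

theorem greedy_step {src tgt : E → V} {s t : V} {rk : V → ℕ}
    (hrk : ∀ e, rk (src e) < rk (tgt e)) (ht : ∀ e, src e ≠ t)
    {seq : ℕ → E → ℕ} {P : ℕ → List E} {w : ℕ → ℕ} (hG : GreedyRun src tgt s t seq P w)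
    (j B : ℕ) (hne : seq j ≠ 0) (L₀ : List E) (hL : IsPath src tgt s t L₀)
    (h1 : ∀ e ∈ L₀, B ≤ seq j e) (h2 : ∀ e, B ≤ seq j e → e ∈ L₀)
    (h3 : ∃ e ∈ L₀, seq j e = B) :
    ∀ e, seq (j + 1) e = seq j e - (if e ∈ L₀ then B else 0) := by
  obtain ⟨g1, g2, g3, g4⟩ := (hG j).1 hne
  have hw := g3 L₀ B hL h1
  have hP : P j = L₀ := walk_unique hrk ht hL.2 g1.2 fun e he => h2 e (hw.trans (g2 e he))
  obtain ⟨e, he, he2⟩ := h3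
  have := g2 e (hP ▸ he)
  have hw' : w j = B := by omega
  intro e
  rw [g4 e, hP, hw']

end General

def Goal (m N K : ℕ) : Prop :=
    ∃ (n : ℕ) (src tgt : Fin m → Fin n) (s t : Fin n)
      (X : Fin m → ℕ),
      IsDAG src tgt ∧ (∀ e, tgt e ≠ s) ∧ (∀ e, src e ≠ t) ∧
      IsFlowN src tgt s t X ∧ X ≠ 0 ∧
      (∀ (seq : ℕ → Fin m → ℕ) (P : ℕ → List (Fin m))
         (w : ℕ → ℕ), seq 0 = X → GreedyRun src tgt s t seq P w →
           seq (1 + N) = 0 ∧ seq N ≠ 0) ∧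
      (∃ (P : Fin K → List (Fin m))
         (w : Fin K → ℕ),
        (∀ i, IsPath src tgt s t (P i)) ∧
        ∀ e, X e = ∑ i, if e ∈ P i then w i else 0)

theorem goal_one : Goal 9 4 4 := by
  have hrk : ∀ e : Fin 9, Fin.val ((![0,0,0,1,1,1,0,0,0] : Fin 9 → Fin 3) e) <
      Fin.val ((![1,1,1,2,2,2,1,1,1] : Fin 9 → Fin 3) e) := by decide
  have hst : (0 : Fin 3) ≠ 2 := by decide
  have hs : ∀ e : Fin 9, (![1,1,1,2,2,2,1,1,1] : Fin 9 → Fin 3) e ≠ 0 := by decide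
  have ht : ∀ e : Fin 9, (![0,0,0,1,1,1,0,0,0] : Fin 9 → Fin 3) e ≠ 2 := by decide
  have ht' : ∀ v : Fin 3, Fin.val v ≤ Fin.val (2 : Fin 3) := by decide
  refine ⟨3, ![0,0,0,1,1,1,0,0,0], ![1,1,1,2,2,2,1,1,1], 0, 2, ![1,5,7,3,4,6,0,0,0],
    isDAG_of_rank (rk := Fin.val) hrk, hs, ht, ?_, by decide, ?_, ?_⟩
  · unfold IsFlowN; decide
  · intro seq P w h0 hG
    have e1 := greedy_step (rk := Fin.val) hrk ht hG 0 6 (by rw [h0]; decide) [2, 5]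
      ⟨by simp, by simp [IsWalk]⟩ (by rw [h0]; decide) (by rw [h0]; decide) (by rw [h0]; decide)
    have e1' : seq 1 = ![1,5,1,3,4,0,0,0,0] := by
      funext e; rw [e1 e, h0]; revert e; decide
    have e2 := greedy_step (rk := Fin.val) hrk ht hG 1 4 (by rw [e1']; decide) [1, 4]
      ⟨by simp, by simp [IsWalk]⟩ (by rw [e1']; decide) (by rw [e1']; decide)
      (by rw [e1']; decide)
    have e2' : seq 2 = ![1,1,1,3,0,0,0,0,0] := by
      funext e; rw [e2 e, e1']; revert e; decide
    have := unit_phase (rk := Fin.val) hrk hst hs ht ht' hG (fun v => v = 0) rfl (by decide) 2 3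
      (by rw [e2']; decide) (by rw [e2']; unfold HasFlow; decide)
    exact ⟨this.1, this.2 2 (by norm_num)⟩
  · refine ⟨![[0, 5], [2, 3], [2, 4], [1, 5]], ![1, 3, 4, 5], ?_, by decide⟩
    intro i
    fin_cases i <;> exact ⟨by simp, by simp [IsWalk]⟩

section Family

/-- Edges of the recursive graph: two copies plus a central edge and two jump edges. -/
def Ed : ℕ → Type
  | 0 => Fin 3
  | h + 1 => (Ed h ⊕ Ed h) ⊕ Fin 3

instance edFintype : (h : ℕ) → Fintype (Ed h)
  | 0 => inferInstanceAs (Fintype (Fin 3))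
  | h + 1 =>
    letI := edFintype h
    inferInstanceAs (Fintype ((Ed h ⊕ Ed h) ⊕ Fin 3))

instance edDecEq : (h : ℕ) → DecidableEq (Ed h)
  | 0 => inferInstanceAs (DecidableEq (Fin 3))
  | h + 1 =>
    letI := edDecEq h
    inferInstanceAs (DecidableEq ((Ed h ⊕ Ed h) ⊕ Fin 3))

def eL {h : ℕ} (e : Ed h) : Ed (h + 1) := Sum.inl (Sum.inl e)
def eR {h : ℕ} (e : Ed h) : Ed (h + 1) := Sum.inl (Sum.inr e)
def eC {h : ℕ} (i : Fin 3) : Ed (h + 1) := Sum.inr i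
def e0 (i : Fin 3) : Ed 0 := i

theorem ed_zero (p : Ed 0 → Prop) (h : ∀ i, p (e0 i)) : ∀ e, p e := h

theorem ed_succ {h : ℕ} (p : Ed (h + 1) → Prop) (h1 : ∀ e, p (eL e)) (h2 : ∀ e, p (eR e))
    (h3 : ∀ i, p (eC i)) : ∀ e, p e := by
  rintro ((e | e) | e)
  · exact h1 e
  · exact h2 e
  · exact h3 e

theorem ed_sum_zero {M : Type} [AddCommMonoid M] (f : Ed 0 → M) :
    ∑ e, f e = f (e0 0) + f (e0 1) + f (e0 2) := Fin.sum_univ_three (fun i : Fin 3 => f i)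

theorem ed_sum_succ {M : Type} [AddCommMonoid M] {h : ℕ} (f : Ed (h + 1) → M) :
    ∑ e, f e = (∑ e, f (eL e)) + (∑ e, f (eR e)) + (f (eC 0) + f (eC 1) + f (eC 2)) := by
  have h1 := Fintype.sum_sum_type (fun e : (Ed h ⊕ Ed h) ⊕ Fin 3 => f e)
  rw [Fintype.sum_sum_type, Fin.sum_univ_three] at h1
  exact h1

theorem ed_card (h : ℕ) : Fintype.card (Ed h) + 3 = 6 * 2 ^ h := by
  induction h with
  | zero => rfl
  | succ h ih =>
    have : Fintype.card (Ed (h + 1)) = Fintype.card (Ed h) + Fintype.card (Ed h) + 3 := by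
      have := Fintype.card_sum (α := Ed h ⊕ Ed h) (β := Fin 3)
      rw [Fintype.card_sum (α := Ed h) (β := Ed h), Fintype.card_fin] at this
      exact this
    rw [this, pow_succ]
    omega

theorem eL_inj {h : ℕ} : Function.Injective (eL (h := h)) :=
  fun _ _ hh => Sum.inl_injective (Sum.inl_injective hh)
theorem eR_inj {h : ℕ} : Function.Injective (eR (h := h)) :=
  fun _ _ hh => Sum.inr_injective (Sum.inl_injective hh)
theorem eC_inj {h : ℕ} : Function.Injective (eC (h := h)) := Sum.inr_injective
theorem eL_ne_eR {h : ℕ} (a b : Ed h) : eL a ≠ eR b := fun hh => by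
  have := Sum.inl_injective hh
  exact Sum.inl_ne_inr this
theorem eL_ne_eC {h : ℕ} (a : Ed h) (b : Fin 3) : eL a ≠ eC b := Sum.inl_ne_inr
theorem eR_ne_eC {h : ℕ} (a : Ed h) (b : Fin 3) : eR a ≠ eC b := Sum.inl_ne_inr
theorem e0_mem (i j : Fin 3) : e0 i ∈ [e0 j] ↔ i = j := List.mem_singleton

def esrc : (h : ℕ) → Ed h → ℕ
  | 0, _ => 0
  | h + 1, Sum.inl (Sum.inl e) => esrc h e
  | h + 1, Sum.inl (Sum.inr e) => esrc h e + 2 ^ (h + 1)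
  | h + 1, Sum.inr i => ![2 ^ (h + 1) - 1, 0, 2 ^ (h + 1) - 1] i

def etgt : (h : ℕ) → Ed h → ℕ
  | 0, _ => 1
  | h + 1, Sum.inl (Sum.inl e) => etgt h e
  | h + 1, Sum.inl (Sum.inr e) => etgt h e + 2 ^ (h + 1)
  | h + 1, Sum.inr i => ![2 ^ (h + 1), 2 ^ (h + 1), 2 ^ (h + 2) - 1] i

def eX (B : ℕ) : (h : ℕ) → Ed h → ℕ
  | 0, i => (![B, 1, 1] : Fin 3 → ℕ) i
  | h + 1, Sum.inl (Sum.inl e) => eX B h e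
  | h + 1, Sum.inl (Sum.inr e) => eX B h e
  | h + 1, Sum.inr i => ![B, 2 ^ (h + 1), 2 ^ (h + 1)] i

def bb : (h : ℕ) → List (Ed h)
  | 0 => [e0 0]
  | h + 1 => (bb h).map eL ++ (eC 0 :: (bb h).map eR)

def dec : (h : ℕ) → List (List (Ed h) × ℕ)
  | 0 => [([e0 1], 1), ([e0 2], 1)]
  | h + 1 => ((bb h).map eL ++ [eC 2], 2 ^ (h + 1)) :: (eC 1 :: (bb h).map eR, 2 ^ (h + 1)) ::
      (dec h).map (fun p => (p.1.map eL ++ (eC 0 :: p.1.map eR), p.2))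

theorem esrc_L {h : ℕ} (e : Ed h) : esrc (h + 1) (eL e) = esrc h e := rfl
theorem esrc_R {h : ℕ} (e : Ed h) : esrc (h + 1) (eR e) = esrc h e + 2 ^ (h + 1) := rfl
theorem esrc_C {h : ℕ} (i : Fin 3) :
    esrc (h + 1) (eC i) = ![2 ^ (h + 1) - 1, 0, 2 ^ (h + 1) - 1] i := rfl
theorem etgt_L {h : ℕ} (e : Ed h) : etgt (h + 1) (eL e) = etgt h e := rfl
theorem etgt_R {h : ℕ} (e : Ed h) : etgt (h + 1) (eR e) = etgt h e + 2 ^ (h + 1) := rfl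
theorem etgt_C {h : ℕ} (i : Fin 3) :
    etgt (h + 1) (eC i) = ![2 ^ (h + 1), 2 ^ (h + 1), 2 ^ (h + 2) - 1] i := rfl
theorem eX_0 (B : ℕ) (i : Fin 3) : eX B 0 (e0 i) = (![B, 1, 1] : Fin 3 → ℕ) i := rfl
theorem eX_L (B : ℕ) {h : ℕ} (e : Ed h) : eX B (h + 1) (eL e) = eX B h e := rfl
theorem eX_R (B : ℕ) {h : ℕ} (e : Ed h) : eX B (h + 1) (eR e) = eX B h e := rfl
theorem eX_C (B : ℕ) {h : ℕ} (i : Fin 3) :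
    eX B (h + 1) (eC i) = ![B, 2 ^ (h + 1), 2 ^ (h + 1)] i := rfl

theorem mem_LR {h : ℕ} (e : Ed h) (p : List (Ed h)) (i : Fin 3) :
    (eL e ∈ p.map eL ↔ e ∈ p) ∧ (eR e ∈ p.map eR ↔ e ∈ p) ∧ (eL e ∉ p.map eR) ∧
    (eR e ∉ p.map eL) ∧ (eC i ∉ p.map eL) ∧ (eC i ∉ p.map eR) := by
  simp [eL_inj.eq_iff, eR_inj.eq_iff, (eL_ne_eR _ _).symm, (eL_ne_eR _ _), (eL_ne_eC _ _),
    (eR_ne_eC _ _)]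

theorem e_lt (h : ℕ) : ∀ e, esrc h e < etgt h e ∧ etgt h e < 2 ^ (h + 1) := by
  induction h with
  | zero => exact ed_zero _ (by intro i; simp [esrc, etgt])
  | succ h ih =>
    have h2 : 2 ^ (h + 2) = 2 * 2 ^ (h + 1) := by ring
    have h1 : 1 < 2 ^ (h + 1) := Nat.one_lt_two_pow (by omega)
    apply ed_succ
    · intro e
      rw [esrc_L, etgt_L]
      have := ih e
      omega
    · intro e
      rw [esrc_R, etgt_R]
      have := ih e
      omega
    · intro i
      rw [esrc_C, etgt_C]
      fin_cases i <;> simp <;> omega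

theorem bb_ne (h : ℕ) : bb h ≠ [] := by
  cases h <;> simp [bb]

theorem walk_L {h : ℕ} {a b : ℕ} {p : List (Ed h)} (hp : IsWalk (esrc h) (etgt h) a b p) :
    IsWalk (esrc (h + 1)) (etgt (h + 1)) a b (p.map eL) :=
  walk_map (src' := esrc (h + 1)) (tgt' := etgt (h + 1)) id eL (fun _ => rfl) (fun _ => rfl) hp

theorem walk_R {h : ℕ} {p : List (Ed h)} (hp : IsWalk (esrc h) (etgt h) 0 (2 ^ (h + 1) - 1) p) :
    IsWalk (esrc (h + 1)) (etgt (h + 1)) (2 ^ (h + 1)) (2 ^ (h + 2) - 1) (p.map eR) := by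
  have := walk_map (src' := esrc (h + 1)) (tgt' := etgt (h + 1)) (fun v => v + 2 ^ (h + 1)) eR
    (fun _ => rfl) (fun _ => rfl) hp
  have h2 : 2 ^ (h + 2) = 2 * 2 ^ (h + 1) := by ring
  have h1 : 1 < 2 ^ (h + 1) := Nat.one_lt_two_pow (by omega)
  convert this using 1
  · simp
  · omega

theorem walk_C {h : ℕ} {p q : List (Ed h)} (hp : IsWalk (esrc h) (etgt h) 0 (2 ^ (h + 1) - 1) p)
    (hq : IsWalk (esrc h) (etgt h) 0 (2 ^ (h + 1) - 1) q) :
    IsWalk (esrc (h + 1)) (etgt (h + 1)) 0 (2 ^ (h + 2) - 1)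
      (p.map eL ++ (eC 0 :: q.map eR)) :=
  walk_append (walk_L hp) ⟨rfl, walk_R hq⟩

theorem bb_walk (h : ℕ) : IsWalk (esrc h) (etgt h) 0 (2 ^ (h + 1) - 1) (bb h) := by
  induction h with
  | zero => exact ⟨rfl, rfl⟩
  | succ h ih => exact walk_C ih ih

theorem dec_length (h : ℕ) : (dec h).length = 2 * h + 2 := by
  induction h with
  | zero => rfl
  | succ h ih => simp [dec, ih]; ring

theorem dec_walk (h : ℕ) : ∀ p ∈ dec h, p.1 ≠ [] ∧
    IsWalk (esrc h) (etgt h) 0 (2 ^ (h + 1) - 1) p.1 := by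
  induction h with
  | zero =>
    intro p hp
    simp only [dec, List.mem_cons, List.not_mem_nil, or_false] at hp
    rcases hp with rfl | rfl
    · exact ⟨by simp, rfl, rfl⟩
    · exact ⟨by simp, rfl, rfl⟩
  | succ h ih =>
    intro p hp
    simp only [dec, List.mem_cons, List.mem_map] at hp
    rcases hp with rfl | rfl | ⟨q, hq, rfl⟩
    · exact ⟨by simp, walk_append (walk_L (bb_walk h)) ⟨rfl, rfl⟩⟩
    · exact ⟨by simp, rfl, walk_R (bb_walk h)⟩
    · exact ⟨by simp, walk_C (ih q hq).2 (ih q hq).2⟩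

theorem dec_weight (h : ℕ) : ((dec h).map Prod.snd).sum + 2 = 2 ^ (h + 2) := by
  induction h with
  | zero => simp [dec]
  | succ h ih =>
    simp only [dec, List.map_cons, List.map_map, List.sum_cons]
    have : (Prod.snd ∘ fun p : List (Ed h) × ℕ =>
      (p.1.map eL ++ (eC 0 :: p.1.map eR) , p.2)) = Prod.snd := rfl
    rw [this]
    have h2 : 2 ^ (h + 2) = 2 * 2 ^ (h + 1) := by ring
    have h3 : 2 ^ (h + 1 + 2) = 4 * 2 ^ (h + 1) := by ring
    omega

theorem dec_sum (B h : ℕ) : ∀ W, W + 2 ^ (h + 1) = B + 2 → ∀ e, eX B h e =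
    ((dec h).map (fun p => if e ∈ p.1 then p.2 else 0)).sum + if e ∈ bb h then W else 0 := by
  induction h with
  | zero =>
    intro W hW
    have : W = B := by omega
    subst this
    apply ed_zero
    intro i
    rw [eX_0]
    simp only [dec, bb, List.map_cons, List.map_nil, List.sum_cons, List.sum_nil, e0_mem]
    fin_cases i <;> simp
  | succ h ih =>
    intro W hW
    have h2 : 2 ^ (h + 2) = 2 * 2 ^ (h + 1) := by ring
    have h3 : 2 ^ (h + 1 + 1) = 2 * 2 ^ (h + 1) := by ring
    have ih' := ih (W + 2 ^ (h + 1)) (by omega)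
    apply ed_succ
    · intro e
      rw [eX_L, ih' e]
      simp only [dec, bb, List.map_cons, List.map_map, List.sum_cons, List.mem_append,
        List.mem_cons, (mem_LR e _ 0).1, (mem_LR e _ 0).2.2.1, eL_ne_eC, or_false,
        if_false, Function.comp_def, List.not_mem_nil]
      split_ifs <;> omega
    · intro e
      rw [eX_R, ih' e]
      simp only [dec, bb, List.map_cons, List.map_map, List.sum_cons, List.mem_append,
        List.mem_cons, (mem_LR e _ 0).2.1, (mem_LR e _ 0).2.2.2.1, eR_ne_eC, false_or,
        if_false, Function.comp_def, List.not_mem_nil]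
      split_ifs <;> omega
    · intro i
      have hd := dec_weight h
      have hd' : (dec h).map Prod.snd = (dec h).map (fun p => p.2) := rfl
      rw [hd'] at hd
      rw [eX_C]
      have hm := fun p => (mem_LR (h := h) ((bb h).head (bb_ne h)) p i).2.2.2.2
      simp only [dec, bb, List.map_cons, List.map_map, List.sum_cons, List.mem_append,
        List.mem_cons, (hm _).1, (hm _).2, false_or, or_false,
        Function.comp_def, List.not_mem_nil, eC_inj.eq_iff]
      fin_cases i <;> simp
      omega

theorem eX_bb (B h : ℕ) : ∀ e, (e ∈ bb h → eX B h e = B) ∧ (e ∉ bb h → eX B h e ≤ 2 ^ h) ∧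
    (Even (esrc h e) → ¬ Even (etgt h e) → e ∉ bb h → eX B h e ≤ 1) := by
  induction h with
  | zero =>
    apply ed_zero
    intro i
    rw [eX_0]
    simp only [bb, e0_mem]
    fin_cases i <;> simp
  | succ h ih =>
    have h3 : 2 ^ (h + 1) = 2 * 2 ^ h := by ring
    have h2 : Even (2 ^ (h + 1)) := by rw [h3]; simp
    have h4 : 0 < 2 ^ h := by positivity
    have h5 : ¬ Even (2 ^ (h + 1) - 1) := by
      rw [Nat.not_even_iff_odd]
      exact Nat.Even.sub_odd (by omega) h2 odd_one
    apply ed_succ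
    · intro e
      rw [eX_L, esrc_L, etgt_L]
      simp only [bb, List.mem_append, List.mem_cons, (mem_LR e _ 0).1,
        (mem_LR e _ 0).2.2.1, eL_ne_eC, or_false]
      refine ⟨(ih e).1, fun hh => ((ih e).2.1 hh).trans (by omega), (ih e).2.2⟩
    · intro e
      rw [eX_R, esrc_R, etgt_R]
      simp only [bb, List.mem_append, List.mem_cons, (mem_LR e _ 0).2.1,
        (mem_LR e _ 0).2.2.2.1, eR_ne_eC, false_or, Nat.even_add, h2, iff_true]
      refine ⟨(ih e).1, fun hh => ((ih e).2.1 hh).trans (by omega), (ih e).2.2⟩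
    · intro i
      rw [eX_C, esrc_C, etgt_C]
      have hm := fun p => (mem_LR (h := h) ((bb h).head (bb_ne h)) p i).2.2.2.2
      simp only [bb, List.mem_append, List.mem_cons, (hm _).1, (hm _).2, false_or, or_false,
        eC_inj.eq_iff]
      fin_cases i
      · simp
      · simp [h2]
      · simp [h5]

theorem e_flow (B h : ℕ) :
    HasFlow (esrc h) (etgt h) 0 (2 ^ (h + 1) - 1) (eX B h) ((B : ℤ) + 2 ^ (h + 1)) := by
  induction h with
  | zero =>
    intro v
    simp only [ed_sum_zero, esrc, etgt, eX_0]
    rcases v with _ | _ | v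
    · simp; ring
    · simp; ring
    · simp
  | succ h ih =>
    have h2 : 2 ^ (h + 2) = 2 * 2 ^ (h + 1) := by ring
    have h3 : 2 ^ (h + 1 + 1) = 2 * 2 ^ (h + 1) := by ring
    have hz : (2 : ℤ) ^ (h + 1 + 1) = 2 * 2 ^ (h + 1) := by ring
    have h1 : 1 < 2 ^ (h + 1) := Nat.one_lt_two_pow (by omega)
    intro v
    simp only [ed_sum_succ, esrc_L, esrc_R, etgt_L, etgt_R, esrc_C, etgt_C, eX_L, eX_R, eX_C,
      Matrix.cons_val_zero, Matrix.cons_val_one, Matrix.cons_val, h2, hz]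
    push_cast
    by_cases hv : v < 2 ^ (h + 1)
    · have i1 := ih v
      have z1 : ∀ e : Ed h, ¬ (etgt h e + 2 ^ (h + 1) = v) := by intro e; omega
      have z2 : ∀ e : Ed h, ¬ (esrc h e + 2 ^ (h + 1) = v) := by intro e; omega
      have y1 : ∀ e : Ed h, (etgt h e = v) ↔ (v = etgt h e) := fun e => eq_comm
      have y2 : ∀ e : Ed h, (esrc h e = v) ↔ (v = esrc h e) := fun e => eq_comm
      simp only [z1, z2, if_false, Finset.sum_const_zero]
      simp only [y1, y2] at i1 ⊢
      have c1 : ¬ (2 ^ (h + 1) = v) := by omega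
      have c2 : ¬ (2 * 2 ^ (h + 1) - 1 = v) := by omega
      have c3 : ¬ (v = 2 * 2 ^ (h + 1) - 1) := by omega
      have c4 : (2 ^ (h + 1) - 1 = v) ↔ (v = 2 ^ (h + 1) - 1) := eq_comm
      have c5 : (0 = v) ↔ (v = 0) := eq_comm
      simp only [c1, c2, c3, c4, c5, if_false]
      by_cases d1 : v = 0
      · have d2 : ¬ (v = 2 ^ (h + 1) - 1) := by omega
        simp only [d2, if_false] at i1 ⊢
        simp only [d1, if_true] at i1 ⊢
        linarith
      · by_cases d2 : v = 2 ^ (h + 1) - 1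
        · simp only [d1, if_false] at i1 ⊢
          simp only [if_pos d2] at i1 ⊢
          linarith
        · simp only [d1, d2, if_false] at i1 ⊢
          linarith
    · obtain ⟨u, rfl⟩ := Nat.exists_eq_add_of_le (not_lt.1 hv)
      have i1 := ih u
      have z1 : ∀ e : Ed h, ¬ (etgt h e = 2 ^ (h + 1) + u) := by
        intro e; have := e_lt h e; omega
      have z2 : ∀ e : Ed h, ¬ (esrc h e = 2 ^ (h + 1) + u) := by
        intro e; have := e_lt h e; omega
      have y1 : ∀ e : Ed h, (etgt h e + 2 ^ (h + 1) = 2 ^ (h + 1) + u) ↔ etgt h e = u := by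
        intro e; omega
      have y2 : ∀ e : Ed h, (esrc h e + 2 ^ (h + 1) = 2 ^ (h + 1) + u) ↔ esrc h e = u := by
        intro e; omega
      simp only [z1, z2, y1, y2, if_false, Finset.sum_const_zero]
      split_ifs at i1 <;> (repeat' split) <;> first | omega | linarith

end Family

theorem goal_big (ℓ : ℕ) (hl : 2 ≤ ℓ) : Goal (7 * 2 ^ ℓ - 5) (2 ^ (ℓ + 1)) (2 * ℓ + 2) := by
  have hp : 4 ≤ 2 ^ ℓ := by
    calc 4 = 2 ^ 2 := rfl
      _ ≤ 2 ^ ℓ := Nat.pow_le_pow_right (by norm_num) hl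
  have hp2 : 2 ^ (ℓ + 1) = 2 * 2 ^ ℓ := by ring
  obtain ⟨B, hB⟩ : ∃ B, 2 ^ (ℓ + 1) = B + 2 := ⟨2 ^ (ℓ + 1) - 2, by omega⟩
  have hcard : Fintype.card (Fin (7 * 2 ^ ℓ - 5)) = Fintype.card (Ed ℓ ⊕ Fin (2 ^ ℓ - 2)) := by
    have := ed_card ℓ
    rw [Fintype.card_sum, Fintype.card_fin, Fintype.card_fin]
    omega
  generalize 7 * 2 ^ ℓ - 5 = m at hcard ⊢
  let σ : Fin m ≃ Ed ℓ ⊕ Fin (2 ^ ℓ - 2) := Fintype.equivOfCardEq hcard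
  let ι : Ed ℓ → Fin m := fun e => σ.symm (Sum.inl e)
  have hι : ∀ e, σ (ι e) = Sum.inl e := fun e => σ.apply_symm_apply _
  have hιi : Function.Injective ι := fun a b hab => Sum.inl_injective (σ.symm.injective hab)
  let s : Fin (2 ^ (ℓ + 1)) := ⟨0, by omega⟩
  let t : Fin (2 ^ (ℓ + 1)) := ⟨2 ^ (ℓ + 1) - 1, by omega⟩
  let src0 : Ed ℓ ⊕ Fin (2 ^ ℓ - 2) → Fin (2 ^ (ℓ + 1)) :=
    Sum.elim (fun e => ⟨esrc ℓ e, by have := e_lt ℓ e; omega⟩) (fun _ => s)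
  let tgt0 : Ed ℓ ⊕ Fin (2 ^ ℓ - 2) → Fin (2 ^ (ℓ + 1)) :=
    Sum.elim (fun e => ⟨etgt ℓ e, by have := e_lt ℓ e; omega⟩) (fun _ => t)
  let X0 : Ed ℓ ⊕ Fin (2 ^ ℓ - 2) → ℕ := Sum.elim (eX B ℓ) (fun _ => 0)
  let src : Fin m → Fin (2 ^ (ℓ + 1)) := fun e => src0 (σ e)
  let tgt : Fin m → Fin (2 ^ (ℓ + 1)) := fun e => tgt0 (σ e)
  let X : Fin m → ℕ := fun e => X0 (σ e)
  have hcase : ∀ e : Fin m, (∃ a, e = ι a) ∨ (∃ b, σ e = Sum.inr b) := by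
    intro e
    rcases h : σ e with a | b
    · left; exact ⟨a, by rw [← σ.symm_apply_apply e, h]⟩
    · right; exact ⟨b, rfl⟩
  have hsrcι : ∀ e, (src (ι e)).val = esrc ℓ e := fun e => by simp only [src, hι]; rfl
  have htgtι : ∀ e, (tgt (ι e)).val = etgt ℓ e := fun e => by simp only [tgt, hι]; rfl
  have hXι : ∀ e, X (ι e) = eX B ℓ e := fun e => by simp only [X, hι]; rfl
  have hrk : ∀ e : Fin m, (src e).val < (tgt e).val := by
    intro e
    rcases hcase e with ⟨a, rfl⟩ | ⟨b, hb⟩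
    · rw [hsrcι, htgtι]; exact (e_lt ℓ a).1
    · simp only [src, tgt, hb]
      show 0 < 2 ^ (ℓ + 1) - 1
      omega
  have ht' : ∀ v : Fin (2 ^ (ℓ + 1)), v.val ≤ t.val := by
    intro v
    have := v.2
    show v.val ≤ 2 ^ (ℓ + 1) - 1
    omega
  have hst : s ≠ t := by
    intro h
    have h2 : 0 = 2 ^ (ℓ + 1) - 1 := congrArg Fin.val h
    omega
  have hs : ∀ e, tgt e ≠ s := by
    intro e h
    have h1 := hrk e
    rw [h] at h1
    exact absurd h1 (Nat.not_lt_zero _)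
  have ht : ∀ e, src e ≠ t := by
    intro e h
    have h1 := hrk e
    rw [h] at h1
    exact absurd h1 (Nat.not_lt.2 (ht' _))
  have hwalk : ∀ L : List (Ed ℓ), IsWalk (esrc ℓ) (etgt ℓ) 0 (2 ^ (ℓ + 1) - 1) L →
      IsWalk src tgt s t (L.map ι) := by
    intro L hL
    have := walk_map (src' := src) (tgt' := tgt) (fun v : ℕ =>
      (⟨v % 2 ^ (ℓ + 1), Nat.mod_lt _ (by omega)⟩ : Fin (2 ^ (ℓ + 1)))) ι ?_ ?_ hL
    · convert this using 1
      · apply Fin.ext; simp [s]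
      · apply Fin.ext; exact (Nat.mod_eq_of_lt (by omega)).symm
    · intro e
      apply Fin.ext
      rw [hsrcι]
      have := e_lt ℓ e
      exact (Nat.mod_eq_of_lt (by omega)).symm
    · intro e
      apply Fin.ext
      rw [htgtι]
      have := e_lt ℓ e
      exact (Nat.mod_eq_of_lt (by omega)).symm
  have hmem : ∀ (L : List (Ed ℓ)) e, ι e ∈ L.map ι ↔ e ∈ L := by
    intro L e
    simp [hιi.eq_iff]
  have hmem' : ∀ (L : List (Ed ℓ)) e b, σ e = Sum.inr b → e ∉ L.map ι := by
    intro L e b hb hh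
    obtain ⟨a, _, rfl⟩ := List.mem_map.1 hh
    rw [hι] at hb
    cases hb
  have hflow : HasFlow src tgt s t X ((B : ℤ) + 2 ^ (ℓ + 1)) := by
    intro v
    have h1 := e_flow B ℓ v.val
    have e1 : (∑ e, if tgt e = v then (X e : ℤ) else 0) =
        ∑ e, if etgt ℓ e = v.val then (eX B ℓ e : ℤ) else 0 := by
      rw [Equiv.sum_comp σ (fun x => if tgt0 x = v then (X0 x : ℤ) else 0),
        Fintype.sum_sum_type]
      simp [tgt0, X0, Fin.ext_iff]
    have e2 : (∑ e, if src e = v then (X e : ℤ) else 0) =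
        ∑ e, if esrc ℓ e = v.val then (eX B ℓ e : ℤ) else 0 := by
      rw [Equiv.sum_comp σ (fun x => if src0 x = v then (X0 x : ℤ) else 0),
        Fintype.sum_sum_type]
      simp [src0, X0, Fin.ext_iff]
    rw [e1, e2]
    simpa only [Fin.ext_iff, s, t] using h1
  have hX0 : X ≠ 0 := hflow.ne_zero hst (by positivity)
  refine ⟨2 ^ (ℓ + 1), src, tgt, s, t, X, isDAG_of_rank (rk := Fin.val) hrk, hs, ht,
    hflow.isFlowN, hX0, ?_, ?_⟩
  · intro seq P w h0 hG
    have hbw := hwalk _ (bb_walk ℓ)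
    have hbX : ∀ e ∈ (bb ℓ).map ι, X e = B := by
      intro e he
      obtain ⟨a, ha, rfl⟩ := List.mem_map.1 he
      rw [hXι]; exact (eX_bb B ℓ a).1 ha
    have e1 := greedy_step (rk := Fin.val) hrk ht hG 0 B (h0 ▸ hX0) ((bb ℓ).map ι)
      ⟨by simpa using bb_ne ℓ, hbw⟩
      (by intro e he; rw [h0, hbX e he])
      (by
        intro e he
        rw [h0] at he
        rcases hcase e with ⟨a, rfl⟩ | ⟨b, hb⟩
        · rw [hmem]
          by_contra hc
          have := (eX_bb B ℓ a).2.1 hc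
          rw [hXι] at he
          omega
        · simp only [X, hb] at he
          have he : B ≤ 0 := he
          omega)
      (by
        obtain ⟨a, ha⟩ := List.exists_mem_of_ne_nil _ (bb_ne ℓ)
        exact ⟨ι a, (hmem _ _).2 ha, by rw [h0]; exact hbX _ ((hmem _ _).2 ha)⟩)
    have hF1 : HasFlow src tgt s t (seq 1) ((2 ^ (ℓ + 1) : ℕ) : ℤ) := by
      have := hflow.sub (walk_flow (rk := Fin.val) hrk hbw B) (Z := seq 1) (by
        intro e
        rw [e1 e, h0]
        split_ifs with h
        · rw [hbX e h]; omega
        · simp)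
      convert this using 1
      push_cast; ring
    have := unit_phase (rk := Fin.val) hrk hst hs ht ht' hG (fun v => Even v.val)
      (by simp [s]) (by
        show ¬ Even (2 ^ (ℓ + 1) - 1)
        rw [Nat.not_even_iff_odd]
        exact ⟨2 ^ ℓ - 1, by omega⟩) 1 (2 ^ (ℓ + 1)) (by
        intro e c1 c2
        rw [e1 e, h0]
        split_ifs with h
        · rw [hbX e h]; omega
        · rcases hcase e with ⟨a, rfl⟩ | ⟨b, hb⟩
          · rw [hsrcι] at c1
            rw [htgtι] at c2
            rw [hmem] at h
            rw [hXι]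
            exact (eX_bb B ℓ a).2.2 c1 c2 h
          · simp only [X, hb]
            exact Nat.zero_le 1) hF1
    refine ⟨this.1, ?_⟩
    have h2 := this.2 (2 ^ (ℓ + 1) - 1) (by omega)
    rwa [show 1 + (2 ^ (ℓ + 1) - 1) = 2 ^ (ℓ + 1) by omega] at h2
  · have hlen := dec_length ℓ
    rw [← hlen]
    refine ⟨fun i => ((dec ℓ).get i).1.map ι, fun i => ((dec ℓ).get i).2, ?_, ?_⟩
    · intro i
      have h1 := dec_walk ℓ _ ((dec ℓ).get_mem i)
      exact ⟨by simpa using h1.1, hwalk _ h1.2⟩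
    · intro e
      rcases hcase e with ⟨a, rfl⟩ | ⟨b, hb⟩
      · simp only [hmem]
        rw [hXι, dec_sum B ℓ 0 (by omega) a, ite_self, add_zero]
        have := Fin.sum_univ_fun_getElem (dec ℓ) (fun p => if a ∈ p.1 then p.2 else 0)
        rw [← this]
        rfl
      · simp only [hmem' _ e b hb, if_false, Finset.sum_const_zero, X, hb]
        rfl

/-- A family of DAGs `G_ℓ` with `7·2^ℓ − 5` edges on which greedy-weight uses exactly
`1 + 2^(ℓ+1)` paths while a flow decomposition of size `2ℓ + 2` exists; hence
greedy-weight has worst-case approximation ratio `Ω(m / log m)`. -/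
theorem stmt_11 :
    ∀ ℓ : ℕ, 1 ≤ ℓ →
    ∃ (n : ℕ) (src tgt : Fin (7 * 2 ^ ℓ - 5) → Fin n) (s t : Fin n)
      (X : Fin (7 * 2 ^ ℓ - 5) → ℕ),
      IsDAG src tgt ∧ (∀ e, tgt e ≠ s) ∧ (∀ e, src e ≠ t) ∧
      IsFlowN src tgt s t X ∧ X ≠ 0 ∧
      (∀ (seq : ℕ → Fin (7 * 2 ^ ℓ - 5) → ℕ) (P : ℕ → List (Fin (7 * 2 ^ ℓ - 5)))
         (w : ℕ → ℕ), seq 0 = X → GreedyRun src tgt s t seq P w →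
           seq (1 + 2 ^ (ℓ + 1)) = 0 ∧ seq (2 ^ (ℓ + 1)) ≠ 0) ∧
      (∃ (P : Fin (2 * ℓ + 2) → List (Fin (7 * 2 ^ ℓ - 5)))
         (w : Fin (2 * ℓ + 2) → ℕ),
        (∀ i, IsPath src tgt s t (P i)) ∧
        ∀ e, X e = ∑ i, if e ∈ P i then w i else 0) := by
  intro ℓ hl
  rcases Nat.lt_or_ge ℓ 2 with h | h
  · obtain rfl : ℓ = 1 := by omega
    exact goal_one
  · exact goal_big ℓ h
end

section
/- There exists a DAG G, a flow X on G, and a minimum flow decomposition of (G,X) into 8 paths P_1,...,P_8 with positive integer weights, such that the induced linear system L(P_1,...,P_8)·w = X admits two distinct positive integer solutions; hence the edge-path incidence matrix of a minimum flow decomposition need not have full column rank (disproving the conjecture of Kloster et al.). -/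
open Finset

def gsrc : Fin 21 → Fin 7 :=
  ![0,0,0,0,1,1,1,1,2,2,2,2,3,3,3,4,4,4,5,5,5]
def gtgt : Fin 21 → Fin 7 :=
  ![1,1,1,1,2,2,2,2,3,3,3,3,4,4,4,5,5,5,6,6,6]

def gP : Fin 8 → List (Fin 21) :=
  ![[0,4,8,12,15,18], [0,4,8,13,16,19],
    [1,5,9,14,16,19], [2,6,10,13,17,19], [3,7,11,13,16,20],
    [1,7,10,14,15,18], [2,5,11,12,17,18], [3,6,9,12,15,20]]

lemma gstep : ∀ e, (gtgt e).val = (gsrc e).val + 1 := by decide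

lemma walk_le : ∀ (L : List (Fin 21)) (a b : Fin 7), IsWalk gsrc gtgt a b L →
    b.val = a.val + L.length := by
  intro L
  induction L with
  | nil => intro a b h; simp only [IsWalk] at h; simp [h]
  | cons e L ih =>
    intro a b h
    simp only [IsWalk] at h
    have := ih _ _ h.2
    have h2 := gstep e
    rw [h.1] at h2
    simp only [List.length_cons]
    omega

lemma walk_src_ge : ∀ (L : List (Fin 21)) (a b : Fin 7), IsWalk gsrc gtgt a b L →
    ∀ e ∈ L, a.val ≤ (gsrc e).val := by
  intro L
  induction L with
  | nil => intro a b h e he; simp at he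
  | cons e L ih =>
    intro a b h e' he
    simp only [IsWalk] at h
    have h2 := gstep e
    rw [h.1] at h2
    rcases List.mem_cons.1 he with rfl | he
    · rw [h.1]
    · have := ih _ _ h.2 e' he
      omega

lemma walk_layer : ∀ (L : List (Fin 21)) (a b : Fin 7), IsWalk gsrc gtgt a b L →
    ∀ l : Fin 7, a.val ≤ l.val → l.val < b.val →
      ∃ e, gsrc e = l ∧ ∀ e', gsrc e' = l → (e' ∈ L ↔ e' = e) := by
  intro L
  induction L with
  | nil => intro a b h l h1 h2; simp only [IsWalk] at h; subst h; omega
  | cons e L ih =>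
    intro a b h l h1 h2
    simp only [IsWalk] at h
    have h3 := gstep e
    rw [h.1] at h3
    by_cases hl : l = a
    · refine ⟨e, by rw [h.1, hl], fun e' he' => ?_⟩
      rw [List.mem_cons]
      constructor
      · rintro (h4 | h4)
        · exact h4
        · have := walk_src_ge L _ _ h.2 e' h4
          rw [he', hl] at this
          omega
      · exact Or.inl
    · have hne : l.val ≠ a.val := fun h => hl (Fin.ext h)
      obtain ⟨f, hf, hf'⟩ := ih _ _ h.2 l (by omega) h2
      refine ⟨f, hf, fun e' he' => ?_⟩
      rw [List.mem_cons, ← hf' e' he']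
      constructor
      · rintro (h4 | h4)
        · subst h4; exact absurd (he'.symm.trans h.1) hl
        · exact h4
      · exact Or.inr

def dl (e g : Fin 21) : ℤ := if g = e then 1 else 0

set_option synthInstance.maxSize 4000 in
set_option synthInstance.maxHeartbeats 2000000 in
set_option maxHeartbeats 4000000 in
lemma chk : ∀ e0, gsrc e0 = 0 → ∀ e1, gsrc e1 = 1 → ∀ e2, gsrc e2 = 2 →
    dl e0 0 = dl e1 4 → dl e0 0 = dl e2 8 →
    dl e0 1 - dl e1 5 = dl e2 10 - dl e0 2 → dl e0 1 - dl e1 5 = dl e1 7 - dl e2 11 →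
    dl e0 1 - dl e2 9 = dl e2 10 - dl e1 6 → dl e0 1 - dl e2 9 = dl e1 7 - dl e0 3 →
    ∀ e3, gsrc e3 = 3 → dl e3 14 = dl e0 1 →
    ∀ e4, gsrc e4 = 4 → dl e4 17 = dl e0 2 → dl e3 12 - dl e4 15 = dl e1 5 - dl e0 1 →
    ∀ e5, gsrc e5 = 5 → dl e5 20 = dl e0 3 → dl e3 12 - dl e5 18 = dl e2 9 - dl e0 1 →
    ∃ j, gP j = [e0, e1, e2, e3, e4, e5] := by
  decide +kernel

def pv (j : Fin 8) : Fin 21 → ℚ := fun e => if e ∈ gP j then 1 else 0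
def sv (S : Finset (Fin 21)) : Fin 21 → ℚ := fun e => if e ∈ S then 1 else 0

lemma pv_sum (c : Fin 8 → ℚ) : (∑ j, c j • pv j) =
   ![c 0 + c 1, c 2 + c 5, c 3 + c 6, c 4 + c 7,
     c 0 + c 1, c 2 + c 6, c 3 + c 7, c 4 + c 5,
     c 0 + c 1, c 2 + c 7, c 3 + c 5, c 4 + c 6,
     c 0 + c 6 + c 7, c 1 + c 3 + c 4, c 2 + c 5,
     c 0 + c 5 + c 7, c 1 + c 2 + c 4, c 3 + c 6,
     c 0 + c 5 + c 6, c 1 + c 2 + c 3, c 4 + c 7] := by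
  funext e
  fin_cases e <;> simp [Fin.sum_univ_succ, pv, gP] <;> ring

lemma nat_sum (c : Fin 8 → ℕ) (e : Fin 21) : (∑ j, if e ∈ gP j then c j else 0) =
   ![c 0 + c 1, c 2 + c 5, c 3 + c 6, c 4 + c 7,
     c 0 + c 1, c 2 + c 6, c 3 + c 7, c 4 + c 5,
     c 0 + c 1, c 2 + c 7, c 3 + c 5, c 4 + c 6,
     c 0 + c 6 + c 7, c 1 + c 3 + c 4, c 2 + c 5,
     c 0 + c 5 + c 7, c 1 + c 2 + c 4, c 3 + c 6,
     c 0 + c 5 + c 6, c 1 + c 2 + c 3, c 4 + c 7] e := by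
  fin_cases e <;> simp [Fin.sum_univ_succ, gP] <;> ring

def V : Submodule ℚ (Fin 21 → ℚ) := Submodule.span ℚ (Set.range pv)

lemma V_finrank : 7 ≤ Module.finrank ℚ V := by
  have hli : LinearIndependent ℚ (fun i : Fin 7 => pv i.succ) := by
    rw [Fintype.linearIndependent_iff]
    intro g hg
    have h1 : ∑ j : Fin 8, (Fin.cons 0 g : Fin 8 → ℚ) j • pv j = 0 := by
      rw [Fin.sum_univ_succ]; simpa using hg
    rw [pv_sum] at h1
    have e1 : (Fin.cons 0 g : Fin 8 → ℚ) 1 = g 0 := rfl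
    have e2 : (Fin.cons 0 g : Fin 8 → ℚ) 2 = g 1 := rfl
    have e3 : (Fin.cons 0 g : Fin 8 → ℚ) 3 = g 2 := rfl
    have e4 : (Fin.cons 0 g : Fin 8 → ℚ) 4 = g 3 := rfl
    have e5 : (Fin.cons 0 g : Fin 8 → ℚ) 5 = g 4 := rfl
    have e6 : (Fin.cons 0 g : Fin 8 → ℚ) 6 = g 5 := rfl
    have e7 : (Fin.cons 0 g : Fin 8 → ℚ) 7 = g 6 := rfl
    have e0 : (Fin.cons 0 g : Fin 8 → ℚ) 0 = 0 := rfl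
    rw [e0, e1, e2, e3, e4, e5, e6, e7] at h1
    have k0 : 0 + g 0 = 0 := congrFun h1 0
    have k1 : g 1 + g 4 = 0 := congrFun h1 1
    have k2 : g 2 + g 5 = 0 := congrFun h1 2
    have k3 : g 3 + g 6 = 0 := congrFun h1 3
    have k5 : g 1 + g 5 = 0 := congrFun h1 5
    have k6 : g 2 + g 6 = 0 := congrFun h1 6
    have k12 : 0 + g 5 + g 6 = 0 := congrFun h1 12
    intro i
    fin_cases i <;> simp <;> linarith
  have h2 := finrank_span_eq_card hli
  rw [Fintype.card_fin] at h2
  rw [← h2]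
  apply Submodule.finrank_mono
  apply Submodule.span_mono
  rintro _ ⟨i, rfl⟩
  exact ⟨_, rfl⟩

lemma path_in_V (L : List (Fin 21)) (hL : IsPath gsrc gtgt 0 6 L) (hV : sv L.toFinset ∈ V) :
    ∃ j, ∀ e, e ∈ L ↔ e ∈ gP j := by
  have hw := walk_layer L _ _ hL.2
  obtain ⟨e0, s0, h0⟩ := hw 0 (by decide) (by decide)
  obtain ⟨e1, s1, h1⟩ := hw 1 (by decide) (by decide)
  obtain ⟨e2, s2, h2⟩ := hw 2 (by decide) (by decide)
  obtain ⟨e3, s3, h3⟩ := hw 3 (by decide) (by decide)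
  obtain ⟨e4, s4, h4⟩ := hw 4 (by decide) (by decide)
  obtain ⟨e5, s5, h5⟩ := hw 5 (by decide) (by decide)
  obtain ⟨c, hc⟩ := (Submodule.mem_span_range_iff_exists_fun ℚ).1 hV
  rw [pv_sum] at hc
  have key : ∀ (l : Fin 7) (e : Fin 21), (∀ e', gsrc e' = l → (e' ∈ L ↔ e' = e)) →
      ∀ e', gsrc e' = l → sv L.toFinset e' = (dl e e' : ℤ) := by
    intro l e h e' he'
    simp [sv, dl, h e' he']
  have k0 := fun e' h => (congrFun hc e').trans (key 0 e0 h0 e' h)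
  have k1 := fun e' h => (congrFun hc e').trans (key 1 e1 h1 e' h)
  have k2 := fun e' h => (congrFun hc e').trans (key 2 e2 h2 e' h)
  have k3 := fun e' h => (congrFun hc e').trans (key 3 e3 h3 e' h)
  have k4 := fun e' h => (congrFun hc e').trans (key 4 e4 h4 e' h)
  have k5 := fun e' h => (congrFun hc e').trans (key 5 e5 h5 e' h)
  have x0 : c 0 + c 1 = (dl e0 0 : ℤ) := k0 0 rfl
  have x1 : c 2 + c 5 = (dl e0 1 : ℤ) := k0 1 rfl
  have x2 : c 3 + c 6 = (dl e0 2 : ℤ) := k0 2 rfl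
  have x3 : c 4 + c 7 = (dl e0 3 : ℤ) := k0 3 rfl
  have x4 : c 0 + c 1 = (dl e1 4 : ℤ) := k1 4 rfl
  have x5 : c 2 + c 6 = (dl e1 5 : ℤ) := k1 5 rfl
  have x6 : c 3 + c 7 = (dl e1 6 : ℤ) := k1 6 rfl
  have x7 : c 4 + c 5 = (dl e1 7 : ℤ) := k1 7 rfl
  have x8 : c 0 + c 1 = (dl e2 8 : ℤ) := k2 8 rfl
  have x9 : c 2 + c 7 = (dl e2 9 : ℤ) := k2 9 rfl
  have x10 : c 3 + c 5 = (dl e2 10 : ℤ) := k2 10 rfl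
  have x11 : c 4 + c 6 = (dl e2 11 : ℤ) := k2 11 rfl
  have x12 : c 0 + c 6 + c 7 = (dl e3 12 : ℤ) := k3 12 rfl
  have x14 : c 2 + c 5 = (dl e3 14 : ℤ) := k3 14 rfl
  have x15 : c 0 + c 5 + c 7 = (dl e4 15 : ℤ) := k4 15 rfl
  have x17 : c 3 + c 6 = (dl e4 17 : ℤ) := k4 17 rfl
  have x18 : c 0 + c 5 + c 6 = (dl e5 18 : ℤ) := k5 18 rfl
  have x20 : c 4 + c 7 = (dl e5 20 : ℤ) := k5 20 rfl
  obtain ⟨j, hj⟩ := chk e0 s0 e1 s1 e2 s2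
    (by rify; have := x0.symm.trans x4; exact_mod_cast this)
    (by have := x0.symm.trans x8; exact_mod_cast this)
    (by qify; linarith) (by qify; linarith) (by qify; linarith) (by qify; linarith)
    e3 s3 (by qify; linarith) e4 s4 (by qify; linarith) (by qify; linarith)
    e5 s5 (by qify; linarith) (by qify; linarith)
  refine ⟨j, fun e => ?_⟩
  rw [hj]
  simp only [List.mem_cons, List.not_mem_nil, or_false]
  have cases : ∀ e, gsrc e = 0 ∨ gsrc e = 1 ∨ gsrc e = 2 ∨ gsrc e = 3 ∨ gsrc e = 4 ∨
    gsrc e = 5 := by decide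
  rcases cases e with h | h | h | h | h | h
  · rw [h0 e h]
    have n1 : e ≠ e1 := fun q => absurd (h.symm.trans ((congrArg gsrc q).trans s1)) (by decide)
    have n2 : e ≠ e2 := fun q => absurd (h.symm.trans ((congrArg gsrc q).trans s2)) (by decide)
    have n3 : e ≠ e3 := fun q => absurd (h.symm.trans ((congrArg gsrc q).trans s3)) (by decide)
    have n4 : e ≠ e4 := fun q => absurd (h.symm.trans ((congrArg gsrc q).trans s4)) (by decide)
    have n5 : e ≠ e5 := fun q => absurd (h.symm.trans ((congrArg gsrc q).trans s5)) (by decide)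
    simp only [n1, n2, n3, n4, n5, false_or, or_false]
  · rw [h1 e h]
    have n0 : e ≠ e0 := fun q => absurd (h.symm.trans ((congrArg gsrc q).trans s0)) (by decide)
    have n2 : e ≠ e2 := fun q => absurd (h.symm.trans ((congrArg gsrc q).trans s2)) (by decide)
    have n3 : e ≠ e3 := fun q => absurd (h.symm.trans ((congrArg gsrc q).trans s3)) (by decide)
    have n4 : e ≠ e4 := fun q => absurd (h.symm.trans ((congrArg gsrc q).trans s4)) (by decide)
    have n5 : e ≠ e5 := fun q => absurd (h.symm.trans ((congrArg gsrc q).trans s5)) (by decide)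
    simp only [n0, n2, n3, n4, n5, false_or, or_false]
  · rw [h2 e h]
    have n0 : e ≠ e0 := fun q => absurd (h.symm.trans ((congrArg gsrc q).trans s0)) (by decide)
    have n1 : e ≠ e1 := fun q => absurd (h.symm.trans ((congrArg gsrc q).trans s1)) (by decide)
    have n3 : e ≠ e3 := fun q => absurd (h.symm.trans ((congrArg gsrc q).trans s3)) (by decide)
    have n4 : e ≠ e4 := fun q => absurd (h.symm.trans ((congrArg gsrc q).trans s4)) (by decide)
    have n5 : e ≠ e5 := fun q => absurd (h.symm.trans ((congrArg gsrc q).trans s5)) (by decide)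
    simp only [n0, n1, n3, n4, n5, false_or, or_false]
  · rw [h3 e h]
    have n0 : e ≠ e0 := fun q => absurd (h.symm.trans ((congrArg gsrc q).trans s0)) (by decide)
    have n1 : e ≠ e1 := fun q => absurd (h.symm.trans ((congrArg gsrc q).trans s1)) (by decide)
    have n2 : e ≠ e2 := fun q => absurd (h.symm.trans ((congrArg gsrc q).trans s2)) (by decide)
    have n4 : e ≠ e4 := fun q => absurd (h.symm.trans ((congrArg gsrc q).trans s4)) (by decide)
    have n5 : e ≠ e5 := fun q => absurd (h.symm.trans ((congrArg gsrc q).trans s5)) (by decide)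
    simp only [n0, n1, n2, n4, n5, false_or, or_false]
  · rw [h4 e h]
    have n0 : e ≠ e0 := fun q => absurd (h.symm.trans ((congrArg gsrc q).trans s0)) (by decide)
    have n1 : e ≠ e1 := fun q => absurd (h.symm.trans ((congrArg gsrc q).trans s1)) (by decide)
    have n2 : e ≠ e2 := fun q => absurd (h.symm.trans ((congrArg gsrc q).trans s2)) (by decide)
    have n3 : e ≠ e3 := fun q => absurd (h.symm.trans ((congrArg gsrc q).trans s3)) (by decide)
    have n5 : e ≠ e5 := fun q => absurd (h.symm.trans ((congrArg gsrc q).trans s5)) (by decide)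
    simp only [n0, n1, n2, n3, n5, false_or, or_false]
  · rw [h5 e h]
    have n0 : e ≠ e0 := fun q => absurd (h.symm.trans ((congrArg gsrc q).trans s0)) (by decide)
    have n1 : e ≠ e1 := fun q => absurd (h.symm.trans ((congrArg gsrc q).trans s1)) (by decide)
    have n2 : e ≠ e2 := fun q => absurd (h.symm.trans ((congrArg gsrc q).trans s2)) (by decide)
    have n3 : e ≠ e3 := fun q => absurd (h.symm.trans ((congrArg gsrc q).trans s3)) (by decide)
    have n4 : e ≠ e4 := fun q => absurd (h.symm.trans ((congrArg gsrc q).trans s4)) (by decide)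
    simp only [n0, n1, n2, n3, n4, false_or, or_false]

def gw (N : ℕ) : Fin 8 → ℕ := fun j => N ^ (j.val + 1)
def gX (N : ℕ) : Fin 21 → ℕ := fun e => ∑ j, if e ∈ gP j then gw N j else 0

lemma span_le {k : ℕ} (S : Fin k → Finset (Fin 21)) (T : Set ℕ) (hT : T.Infinite)
    (h : ∀ N ∈ T, ∃ u : Fin k → ℕ, ∀ e, gX N e = ∑ i, if e ∈ S i then u i else 0) :
    V ≤ Submodule.span ℚ (Set.range fun i => sv (S i)) := by
  unfold V
  rw [Submodule.span_le]
  rintro _ ⟨j, rfl⟩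
  by_contra hj
  obtain ⟨f, hf, hf'⟩ := Submodule.exists_le_ker_of_notMem hj
  let p : Polynomial ℚ := ∑ j : Fin 8, Polynomial.C (f (pv j)) * Polynomial.X ^ (j.val + 1)
  have hp : p = 0 := by
    apply Polynomial.eq_zero_of_infinite_isRoot
    refine Set.Infinite.mono ?_ (hT.image (f := fun N : ℕ => (N : ℚ)) Nat.cast_injective.injOn)
    rintro _ ⟨N, hN, rfl⟩
    obtain ⟨u, hu⟩ := h N hN
    have e1 : (∑ j, (gw N j : ℚ) • pv j) = ∑ i, (u i : ℚ) • sv (S i) := by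
      funext e
      have := hu e
      unfold gX at this
      have := congrArg (Nat.cast : ℕ → ℚ) this
      push_cast at this
      simpa [Finset.sum_apply, pv, sv] using this
    have e2 := congrArg f e1
    rw [map_sum, map_sum] at e2
    simp only [map_smul] at e2
    have e3 : ∀ i, f (sv (S i)) = 0 := fun i =>
      hf' (Submodule.subset_span ⟨i, rfl⟩)
    simp only [e3, smul_zero, Finset.sum_const_zero] at e2
    simp only [Set.mem_setOf_eq, Polynomial.IsRoot, p, Polynomial.eval_finset_sum]
    rw [← e2]
    refine Finset.sum_congr rfl fun j _ => ?_
    rw [Polynomial.eval_mul, Polynomial.eval_C, Polynomial.eval_pow, Polynomial.eval_X,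
      smul_eq_mul, mul_comm]
    unfold gw
    rw [Nat.cast_pow]
  have hc : p.coeff (j.val + 1) = f (pv j) := by
    simp [p, Polynomial.finset_sum_coeff, Polynomial.coeff_X_pow, Fin.val_inj]
  rw [hp] at hc
  exact hf hc.symm

lemma final (N : ℕ) (hN : 3 ≤ N) (ho : Odd N) {k : ℕ} (hk : k < 8) (g : Fin k → Fin 8)
    (u : Fin k → ℕ) (h : ∀ e, gX N e = ∑ i, if e ∈ gP (g i) then u i else 0) : False := by
  obtain ⟨j, hj⟩ : ∃ j, ∀ i, g i ≠ j := by
    by_contra hcon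
    push Not at hcon
    have := Fintype.card_le_of_surjective g hcon
    simp at this
    omega
  let v : Fin 8 → ℕ := fun j => ∑ i, if g i = j then u i else 0
  have hv0 : v j = 0 := by simp [v, hj]
  have hv : ∀ e, (∑ j, if e ∈ gP j then v j else 0) = gX N e := by
    intro e
    rw [h e]
    have : ∀ j, (if e ∈ gP j then v j else 0) =
        ∑ i, if g i = j then (if e ∈ gP (g i) then u i else 0) else 0 := by
      intro j
      by_cases hh : e ∈ gP j
      · rw [if_pos hh]
        refine Finset.sum_congr rfl fun i _ => ?_
        by_cases h3 : g i = j
        · simp [h3, hh]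
        · simp [h3]
      · rw [if_neg hh]
        symm
        apply Finset.sum_eq_zero
        intro i _
        by_cases h3 : g i = j
        · simp [h3, hh]
        · simp [h3]
    simp_rw [this]
    rw [Finset.sum_comm]
    simp
  have hv' : ∀ e, _ = _ := fun e => (nat_sum v e).symm.trans ((hv e).trans (nat_sum (gw N) e))
  have k0 : v 0 + v 1 = gw N 0 + gw N 1 := hv' 0
  have k1 : v 2 + v 5 = gw N 2 + gw N 5 := hv' 1
  have k2 : v 3 + v 6 = gw N 3 + gw N 6 := hv' 2
  have k3 : v 4 + v 7 = gw N 4 + gw N 7 := hv' 3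
  have k5 : v 2 + v 6 = gw N 2 + gw N 6 := hv' 5
  have k6 : v 3 + v 7 = gw N 3 + gw N 7 := hv' 6
  have k12 : v 0 + v 6 + v 7 = gw N 0 + gw N 6 + gw N 7 := hv' 12
  have o0 : gw N 0 % 2 = 1 := Nat.odd_iff.1 (ho.pow)
  have o1 : gw N 1 % 2 = 1 := Nat.odd_iff.1 (ho.pow)
  have mono : ∀ a b : Fin 8, a ≤ b → gw N a ≤ gw N b := fun a b hab =>
    Nat.pow_le_pow_right (by omega) (by have : a.val ≤ b.val := hab; omega)
  have pos : 0 < gw N 0 := by simp [gw]; omega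
  have m1 := mono 0 1 (by decide)
  have m2 := mono 1 2 (by decide)
  have m3 := mono 1 3 (by decide)
  have m4 := mono 1 4 (by decide)
  have m5 := mono 1 5 (by decide)
  have m6 := mono 1 6 (by decide)
  have m7 := mono 1 7 (by decide)
  generalize gw N = w at *
  fin_cases j <;> simp at hv0 <;> omega

lemma minimal : ∃ t : ℕ, ∀ (k : ℕ) (Q : Fin k → List (Fin 21)) (u : Fin k → ℕ),
    (∀ i, IsPath gsrc gtgt 0 6 (Q i)) → (∀ i, 0 < u i) →
    (∀ e, gX (2 * t + 3) e = ∑ i, if e ∈ Q i then u i else 0) → 8 ≤ k := by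
  by_contra hcon
  push Not at hcon
  choose k Q u hQ hu hX hk using hcon
  let F : ℕ → (Σ k : Fin 8, (Fin k.val → Finset (Fin 21))) := fun t =>
    ⟨⟨k t, hk t⟩, fun i => (Q t i).toFinset⟩
  obtain ⟨⟨κ, S⟩, hinf⟩ := Finite.exists_infinite_fiber F
  have hinf' : (F ⁻¹' {⟨κ, S⟩}).Infinite := Set.infinite_coe_iff.1 hinf
  have hV : V ≤ Submodule.span ℚ (Set.range fun i => sv (S i)) := by
    apply span_le S ((fun t => 2 * t + 3) '' (F ⁻¹' {⟨κ, S⟩}))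
    · apply hinf'.image
      intro a _ b _ h
      simp only at h
      omega
    · rintro _ ⟨t, ht, rfl⟩
      have ht' : F t = ⟨κ, S⟩ := ht
      clear ht
      simp only [F, Sigma.mk.injEq] at ht'
      obtain ⟨h1, h2⟩ := ht'
      subst h1
      have h2 := eq_of_heq h2
      subst h2
      exact ⟨u t, fun e => by simpa using hX t e⟩
  have hfr : Module.finrank ℚ (Submodule.span ℚ (Set.range fun i => sv (S i))) ≤ κ.val := by
    have := finrank_range_le_card (R := ℚ) (fun i => sv (S i))
    rw [Fintype.card_fin] at this
    exact this
  have hκ := κ.2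
  have hEq := Submodule.eq_of_le_of_finrank_le hV (by have := V_finrank; omega)
  obtain ⟨t, ht⟩ := hinf'.nonempty
  have ht' : F t = ⟨κ, S⟩ := ht
  clear ht
  simp only [F, Sigma.mk.injEq] at ht'
  obtain ⟨h1, h2⟩ := ht'
  subst h1
  have h2 := eq_of_heq h2
  subst h2
  have hm : ∀ i, ∃ j, ∀ e, e ∈ Q t i ↔ e ∈ gP j := fun i =>
    path_in_V _ (hQ t i) (by rw [hEq]; exact Submodule.subset_span ⟨i, rfl⟩)
  choose g hg using hm
  exact final (2 * t + 3) (by omega) ⟨t + 1, by ring⟩ (hk t) g (u t)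
    (fun e => by rw [hX t e]; simp only [hg])

def gw' (N : ℕ) : Fin 8 → ℕ :=
  ![gw N 0 + 2, gw N 1 - 2, gw N 2 + 1, gw N 3 + 1, gw N 4 + 1,
    gw N 5 - 1, gw N 6 - 1, gw N 7 - 1]

/-- There is a DAG with a flow and a *minimum* flow decomposition into `8` positively
weighted paths whose edge-path incidence system admits two distinct positive integer
solutions; hence the system does not have full column rank, disproving the conjecture
of Kloster et al. -/
theorem stmt_17 :
    ∃ (n m : ℕ) (src tgt : Fin m → Fin n) (s t : Fin n) (X : Fin m → ℕ)
      (P : Fin 8 → List (Fin m)) (w w' : Fin 8 → ℕ),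
      IsDAG src tgt ∧ (∀ e, tgt e ≠ s) ∧ (∀ e, src e ≠ t) ∧
      IsFlowN src tgt s t X ∧
      (∀ i, IsPath src tgt s t (P i)) ∧
      (∀ i, 0 < w i) ∧ (∀ i, 0 < w' i) ∧ w ≠ w' ∧
      (∀ e, X e = ∑ i, if e ∈ P i then w i else 0) ∧
      (∀ e, X e = ∑ i, if e ∈ P i then w' i else 0) ∧
      (∀ (k : ℕ) (Q : Fin k → List (Fin m)) (u : Fin k → ℕ),
        (∀ i, IsPath src tgt s t (Q i)) → (∀ i, 0 < u i) →
        (∀ e, X e = ∑ i, if e ∈ Q i then u i else 0) → 8 ≤ k) := by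
  obtain ⟨t, ht⟩ := minimal
  have big : ∀ j : Fin 8, 3 ≤ gw (2 * t + 3) j := fun j =>
    le_trans (by omega) (Nat.le_self_pow (by omega) (2 * t + 3))
  have b1 := big 1
  have b5 := big 5
  have b6 := big 6
  have b7 := big 7
  have hX' : ∀ e, gX (2 * t + 3) e = ∑ i, if e ∈ gP i then gw' (2 * t + 3) i else 0 := by
    intro e
    unfold gX
    rw [nat_sum, nat_sum]
    unfold gw'
    generalize gw (2 * t + 3) = w at *
    fin_cases e <;> simp <;> omega
  refine ⟨7, 21, gsrc, gtgt, 0, 6, gX (2 * t + 3), gP, gw (2 * t + 3), gw' (2 * t + 3),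
    ?_, by decide, by decide, ?_, ?_, ?_, ?_, ?_, fun e => rfl, hX', ht⟩
  · intro v L hL h
    have := walk_le L v v h
    have := List.length_pos_iff.2 hL
    omega
  · intro v h0 h6
    have hx : ∀ e, gX (2 * t + 3) e = _ := nat_sum (gw (2 * t + 3))
    simp only [hx]
    generalize gw (2 * t + 3) = w at *
    fin_cases v
    · exact absurd rfl h0
    all_goals first
      | exact absurd rfl h6
      | (simp [Fin.sum_univ_succ, gsrc, gtgt]; ring)
  · intro i
    fin_cases i <;> simp [IsPath, IsWalk, gP, gsrc, gtgt]
  · intro i; have := big i; omega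
  · intro i
    unfold gw'
    generalize gw (2 * t + 3) = w at *
    fin_cases i <;> simp <;> omega
  · intro h
    have := congrFun h 0
    simp [gw'] at this
end
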